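/- arXiv:2112.03582 — 2 statements merged into one kernel-verified Lean document; each statement's English description precedes it below -/
import Mathlib

section
/- Conditional relative entropy is convex linear. Precisely: let (X, p) be a finite probability space, and for each x ∈ X let ♠^x be a 2-morphism datum with finite sets U_x, V_x, U'_x, V'_x, probability distribution q^x on U_x, channel f_x : U_x ⇝ V_x, functions μ^x : U_x → U'_x and ν^x : V_x → V'_x, channel f'_x : U'_x ⇝ V'_x, and stochastic section t^x : V'_x ⇝ V_x of ν^x, satisfying ν^x∘f_x = f'_x∘μ^x. Form the convex combination ⊕_{x∈X} p_x ♠^x on the disjoint unions ∐_x U_x, ∐_x V_x, ∐_x U'_x, ∐_x V'_x, with distribution (x,u) ↦ p_x q^x_u, channel ⊕_x f_x (equal to f_x on the x-th components and 0 between different components), functions ⊕_x μ^x and ⊕_x ν^x acting componentwise, and section ⊕_x t^x. Then CE( ⊕_{x∈X} p_x ♠^x ) = ∑_{x∈X} p_x CE(♠^x), as an identity in [0,∞]. -/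
open scoped ENNReal BigOperators

/-- A probability distribution on a finite set `X`. -/
def IsDist {X : Type*} [Fintype X] (p : X → ℝ) : Prop :=
  (∀ x, 0 ≤ p x) ∧ ∑ x, p x = 1

/-- A channel from `X` to `Y`; `f y x` is the probability of output `y` given input `x`. -/
def IsChannel {X Y : Type*} [Fintype Y] (f : Y → X → ℝ) : Prop :=
  (∀ y x, 0 ≤ f y x) ∧ ∀ x, ∑ y, f y x = 1

/-- Composite of channels: `(g ∘ f) z x = ∑ y, g z y * f y x`. -/
noncomputable def chComp {X Y Z : Type*} [Fintype Y]
    (g : Z → Y → ℝ) (f : Y → X → ℝ) : Z → X → ℝ :=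
  fun z x => ∑ y, g z y * f y x

/-- The pure (deterministic) channel associated to a function. -/
def pureCh {X Y : Type*} [DecidableEq Y] (φ : X → Y) : Y → X → ℝ :=
  fun y x => if y = φ x then 1 else 0

/-- Pushforward of a distribution along a channel. -/
noncomputable def push {X Y : Type*} [Fintype X] (f : Y → X → ℝ) (p : X → ℝ) : Y → ℝ :=
  fun y => ∑ x, f y x * p x

/-- The identity channel. -/
def idChan {X : Type*} [DecidableEq X] : X → X → ℝ :=
  fun x x' => if x = x' then 1 else 0

/-- `s : Y ⇝ X` is a stochastic section of `φ : X → Y` if it is a channel and `φ ∘ s = id_Y`. -/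
def IsSection {X Y : Type*} [Fintype X] [Fintype Y] [DecidableEq Y]
    (φ : X → Y) (s : X → Y → ℝ) : Prop :=
  IsChannel s ∧ chComp (pureCh φ) s = idChan

open scoped Classical in
/-- Relative entropy `D(p,q) ∈ [0,∞]`, with the conventions `0·log(0/q) = 0` and
`p·log(p/0) = ∞` for `p ≠ 0`. -/
noncomputable def relEnt {X : Type*} [Fintype X] (p q : X → ℝ) : ℝ≥0∞ :=
  if ∀ x, p x ≠ 0 → q x ≠ 0 then
    ENNReal.ofReal (∑ x, if p x = 0 then 0 else p x * Real.log (p x / q x))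
  else ⊤

/-- The direct sum of a family of channels `f x : A x ⇝ B x` over disjoint unions,
equal to `f x` on the `x`-th components and `0` between different components. -/
def dSum {X : Type*} [DecidableEq X] {A B : X → Type*}
    (f : ∀ x, B x → A x → ℝ) : (Σ x, B x) → (Σ x, A x) → ℝ :=
  fun b a => if h : a.1 = b.1 then f b.1 b.2 (h ▸ a.2) else 0

/-!
Direct sum commutes with composition and turns the pure channels `μ x` into the pure channel of the
componentwise function, so both channels compared on the left-hand side are direct sums. Their
columns at `⟨x, u⟩` are supported on the component of `x`, and points outside the support of the
first argument do not contribute to relative entropy. Hence the relative entropy at `⟨x, u⟩` is the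
one computed in the `x`-th summand, and the weights `p x * q x u` factor.
-/

section RelEnt

variable {X Y : Type*} [Fintype X] [Fintype Y]

theorem relEnt_comp_of_injective {φ : X → Y} (hφ : Function.Injective φ) {p : Y → ℝ} (q : Y → ℝ)
    (hp : ∀ y ∉ Set.range φ, p y = 0) : relEnt (p ∘ φ) (q ∘ φ) = relEnt p q := by
  have absolutelyContinuous_iff :
      (∀ x, (p ∘ φ) x ≠ 0 → (q ∘ φ) x ≠ 0) ↔ ∀ y, p y ≠ 0 → q y ≠ 0 := by
    refine ⟨fun h y hy => ?_, fun h x => h (φ x)⟩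
    obtain ⟨x, rfl⟩ : y ∈ Set.range φ := by_contra fun hy' => hy (hp y hy')
    exact h x hy
  simp only [relEnt, absolutelyContinuous_iff]
  congr 2
  exact Fintype.sum_of_injective φ hφ _ _ (fun y hy => if_pos (hp y hy)) fun _ => rfl

/-- The conditional relative entropy of the channel `f` with respect to the reference channel `g`,
both from `X` to `Y`, given the distribution `p` of the input. The paper's `CE(♠)` is the case
`g = t ∘ f' ∘ μ`. -/
noncomputable def condRelEnt (p : X → ℝ) (f g : Y → X → ℝ) : ℝ≥0∞ :=
  ∑ x, ENNReal.ofReal (p x) * relEnt (fun y => f y x) (fun y => g y x)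

end RelEnt

section DirectSum

variable {X : Type*} [DecidableEq X] {A B C : X → Type*}

theorem dSum_mk_self (f : ∀ x, B x → A x → ℝ) (x : X) (b : B x) (a : A x) :
    dSum f ⟨x, b⟩ ⟨x, a⟩ = f x b a :=
  dif_pos rfl

theorem dSum_eq_zero (f : ∀ x, B x → A x → ℝ) {b : Σ x, B x} {a : Σ x, A x} (h : a.1 ≠ b.1) :
    dSum f b a = 0 :=
  dif_neg h

theorem pureCh_sigma [∀ x, DecidableEq (B x)] (φ : ∀ x, A x → B x) :
    pureCh (fun a : Σ x, A x => (⟨a.1, φ a.1 a.2⟩ : Σ x, B x)) = dSum fun x => pureCh (φ x) := by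
  funext ⟨y, b⟩ ⟨x, a⟩
  obtain rfl | hxy := eq_or_ne x y
  · simp [dSum_mk_self, pureCh]
  · rw [dSum_eq_zero _ hxy]
    exact if_neg fun h => hxy (congrArg Sigma.fst h).symm

variable [Fintype X] [∀ x, Fintype (B x)]

theorem chComp_dSum (g : ∀ x, C x → B x → ℝ) (f : ∀ x, B x → A x → ℝ) :
    chComp (dSum g) (dSum f) = dSum fun x => chComp (g x) (f x) := by
  funext ⟨z, c⟩ ⟨x, a⟩
  have sum_component : chComp (dSum g) (dSum f) ⟨z, c⟩ ⟨x, a⟩ =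
      ∑ b, dSum g ⟨z, c⟩ ⟨x, b⟩ * f x b a := by
    rw [chComp, Fintype.sum_sigma, Fintype.sum_eq_single x fun y hy =>
      Finset.sum_eq_zero fun b _ => by rw [dSum_eq_zero f hy.symm, mul_zero]]
    simp only [dSum_mk_self]
  rw [sum_component]
  obtain rfl | hxz := eq_or_ne x z
  · simp only [dSum_mk_self, chComp]
  · rw [dSum_eq_zero _ hxz]
    exact Finset.sum_eq_zero fun b _ => by rw [dSum_eq_zero g hxz, zero_mul]

theorem relEnt_dSum (f g : ∀ x, B x → A x → ℝ) (x : X) (a : A x) :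
    relEnt (fun b => dSum f b ⟨x, a⟩) (fun b => dSum g b ⟨x, a⟩) =
      relEnt (fun b => f x b a) (fun b => g x b a) := by
  have vanishes_off_component : ∀ b ∉ Set.range (Sigma.mk x : B x → Σ x, B x),
      dSum f b ⟨x, a⟩ = 0 := by
    rintro ⟨y, b⟩ hb
    refine dSum_eq_zero f fun h => hb ?_
    subst h
    exact ⟨b, rfl⟩
  rw [← relEnt_comp_of_injective sigma_mk_injective _ vanishes_off_component]
  simp only [Function.comp_def, dSum_mk_self]

theorem condRelEnt_convex_linear_general [∀ x, Fintype (A x)] {p : X → ℝ} (hp : ∀ x, 0 ≤ p x)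
    (q : ∀ x, A x → ℝ) (f g : ∀ x, B x → A x → ℝ) :
    condRelEnt (fun a : Σ x, A x => p a.1 * q a.1 a.2) (dSum f) (dSum g) =
      ∑ x, ENNReal.ofReal (p x) * condRelEnt (q x) (f x) (g x) := by
  simp only [condRelEnt, Fintype.sum_sigma, relEnt_dSum, ENNReal.ofReal_mul (hp _), mul_assoc,
    Finset.mul_sum]

end DirectSum

/-- Conditional relative entropy is convex linear. -/
theorem condRelEnt_convex_linear {X : Type*} [Fintype X] [DecidableEq X]
    {U V U' V' : X → Type*}
    [∀ x, Fintype (U x)] [∀ x, Fintype (V x)]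
    [∀ x, Fintype (U' x)] [∀ x, Fintype (V' x)]
    [∀ x, DecidableEq (U' x)] [∀ x, DecidableEq (V' x)]
    (p : X → ℝ) (q : ∀ x, U x → ℝ)
    (f : ∀ x, V x → U x → ℝ) (f' : ∀ x, V' x → U' x → ℝ)
    (μ : ∀ x, U x → U' x) (ν : ∀ x, V x → V' x)
    (t : ∀ x, V x → V' x → ℝ)
    (hp : IsDist p) (hq : ∀ x, IsDist (q x))
    (hf : ∀ x, IsChannel (f x)) (hf' : ∀ x, IsChannel (f' x))
    (ht : ∀ x, IsSection (ν x) (t x))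
    (hcomm : ∀ x, chComp (pureCh (ν x)) (f x) = chComp (f' x) (pureCh (μ x))) :
    (∑ u : Σ x, U x, ENNReal.ofReal (p u.1 * q u.1 u.2) *
        relEnt (fun v : Σ x, V x => dSum f v u)
          (fun v : Σ x, V x =>
            chComp (dSum t)
              (chComp (dSum f')
                (pureCh (fun u : Σ x, U x => (⟨u.1, μ u.1 u.2⟩ : Σ x, U' x)))) v u))
      = ∑ x, ENNReal.ofReal (p x) *
          ∑ u, ENNReal.ofReal (q x u) *
            relEnt (fun v => f x v u)
              (fun v => chComp (t x) (chComp (f' x) (pureCh (μ x))) v u) := by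
  rw [pureCh_sigma, chComp_dSum, chComp_dSum]
  exact condRelEnt_convex_linear_general hp.1 q f _
end

section
/- 2-relative entropy is functorial with respect to vertical composition. Precisely: let X, Y, X', Y', X'', Y'' be finite sets; p a probability distribution on X; f : X ⇝ Y, f' : X' ⇝ Y', f'' : X'' ⇝ Y'' channels; μ : X → X', μ' : X' → X'', ν : Y → Y', ν' : Y' → Y'' functions; s : X' ⇝ X a stochastic section of μ, s' : X'' ⇝ X' a stochastic section of μ', t : Y' ⇝ Y a stochastic section of ν, t' : Y'' ⇝ Y' a stochastic section of ν'; with ν∘f = f'∘μ and ν'∘f' = f''∘μ' as channels. Let p' = μ∘p. Define RE_2(♠) = D(p, s∘μ∘p) + ∑_{x∈X} p_x D(f^x, (t∘f'∘μ)^x), RE_2(♣) = D(p', s'∘μ'∘p') + ∑_{x'∈X'} p'_{x'} D(f'^{x'}, (t'∘f''∘μ')^{x'}), and RE_2(♣∘♠) = D(p, (s∘s')∘(μ'∘μ)∘p) + ∑_{x∈X} p_x D(f^x, ((t∘t')∘f''∘(μ'∘μ))^x). Then RE_2(♣∘♠) = RE_2(♠) + RE_2(♣), as an identity in [0,∞].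 -/
open scoped ENNReal BigOperators

/-!
A reference `push s q` built from a section `s` of `φ` has the same conditional law on each fibre
of `φ`, namely `s`, whatever `q` is. Splitting `log (p / s q)` at `p' = push (pureCh φ) p` into
`log (p / s p')` and `log (p' / q)` therefore gives the chain rule
`D(p, s q) = D(p, s p') + D(p', q)`. Apply it to `p` along `μ` and to each column `f^x` along `ν`.
The commuting square says that `f^x` pushes forward to `f'^(μ x)`, so the extra terms of the columns
depend on `μ x` only and average over `p` to an average over `p'`.
-/

open Function

section Channels

variable {X Y Z W : Type*}

lemma chComp_pureCh_apply [Fintype Y] [DecidableEq Y] (f : Z → Y → ℝ) (φ : X → Y) (z : Z) (x : X) :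
    chComp f (pureCh φ) z x = f z (φ x) := by
  simp [chComp, pureCh]

lemma pureCh_comp [Fintype Y] [DecidableEq Y] [DecidableEq Z] (ψ : Y → Z) (φ : X → Y) :
    pureCh (ψ ∘ φ) = chComp (pureCh ψ) (pureCh φ) := by
  ext z x
  rw [chComp_pureCh_apply]
  rfl

lemma chComp_assoc [Fintype Y] [Fintype Z] (h : W → Z → ℝ) (g : Z → Y → ℝ) (f : Y → X → ℝ) :
    chComp (chComp h g) f = chComp h (chComp g f) := by
  ext w x
  simp only [chComp, Finset.sum_mul, Finset.mul_sum, mul_assoc]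
  exact Finset.sum_comm

lemma push_chComp [Fintype X] [Fintype Y] (g : Z → Y → ℝ) (f : Y → X → ℝ) (p : X → ℝ) :
    push (chComp g f) p = push g (push f p) := by
  ext z
  simp only [push, chComp, Finset.sum_mul, Finset.mul_sum, mul_assoc]
  exact Finset.sum_comm

lemma isChannel_pureCh [Fintype Y] [DecidableEq Y] (φ : X → Y) : IsChannel (pureCh φ) :=
  ⟨fun y x => by unfold pureCh; positivity, fun x => by simp [pureCh]⟩

lemma IsChannel.isDist [Fintype Y] {f : Y → X → ℝ} (hf : IsChannel f) (x : X) :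
    IsDist fun y => f y x :=
  ⟨fun y => hf.1 y x, hf.2 x⟩

lemma IsChannel.isDist_push [Fintype X] [Fintype Y] {f : Y → X → ℝ} {p : X → ℝ}
    (hf : IsChannel f) (hp : IsDist p) : IsDist (push f p) := by
  refine ⟨fun y => Finset.sum_nonneg fun x _ => mul_nonneg (hf.1 y x) (hp.1 x), ?_⟩
  simp only [push]
  rw [Finset.sum_comm]
  simp only [← Finset.sum_mul, hf.2, one_mul, hp.2]

lemma IsChannel.chComp [Fintype Y] [Fintype Z] {g : Z → Y → ℝ} {f : Y → X → ℝ}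
    (hg : IsChannel g) (hf : IsChannel f) : IsChannel (chComp g f) :=
  ⟨fun z x => (hg.isDist_push (hf.isDist x)).1 z, fun x => (hg.isDist_push (hf.isDist x)).2⟩

end Channels

section PushPureCh

variable {X Y : Type*} [Fintype X] [DecidableEq Y]

lemma push_pureCh_apply (φ : X → Y) (p : X → ℝ) (y : Y) :
    push (pureCh φ) p y = ∑ x with φ x = y, p x := by
  simp [push, pureCh, Finset.sum_filter, eq_comm]

lemma support_push_pureCh (φ : X → Y) {p : X → ℝ} (hp : ∀ x, 0 ≤ p x) :
    support (push (pureCh φ) p) = φ '' support p := by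
  ext y
  rw [mem_support, push_pureCh_apply, ne_eq, Finset.sum_eq_zero_iff_of_nonneg fun x _ => hp x]
  simp [and_comm]

lemma sum_fiberwise_mul {R : Type*} [NonUnitalNonAssocSemiring R] [Fintype Y]
    (φ : X → Y) (a : X → R) (g : Y → R) :
    ∑ y, (∑ x with φ x = y, a x) * g y = ∑ x, a x * g (φ x) := by
  simp only [Finset.sum_mul, Finset.sum_filter]
  rw [Finset.sum_comm]
  simp

lemma sum_push_pureCh_mul [Fintype Y] (φ : X → Y) (p : X → ℝ) (g : Y → ℝ) :
    ∑ y, push (pureCh φ) p y * g y = ∑ x, p x * g (φ x) := by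
  simp only [push_pureCh_apply, sum_fiberwise_mul]

lemma sum_ofReal_push_pureCh_mul [Fintype Y] (φ : X → Y) {p : X → ℝ} (hp : ∀ x, 0 ≤ p x)
    (g : Y → ℝ≥0∞) :
    ∑ y, ENNReal.ofReal (push (pureCh φ) p y) * g y = ∑ x, ENNReal.ofReal (p x) * g (φ x) := by
  simp only [push_pureCh_apply, ENNReal.ofReal_sum_of_nonneg fun x _ => hp x,
    sum_fiberwise_mul]

end PushPureCh

namespace IsSection

variable {X Y : Type*} [Fintype X] [Fintype Y] [DecidableEq Y] {φ : X → Y} {s : X → Y → ℝ}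

lemma eq_zero_of_ne (hs : IsSection φ s) {x : X} {y : Y} (h : φ x ≠ y) : s x y = 0 := by
  have fiber_sum : ∑ x' with φ x' = φ x, s x' y = 0 := by
    rw [← push_pureCh_apply φ fun x' => s x' y]
    exact (congrFun₂ hs.2 (φ x) y).trans (if_neg h)
  exact (Finset.sum_eq_zero_iff_of_nonneg fun x' _ => hs.1.1 x' y).1 fiber_sum x (by simp)

lemma push_apply (hs : IsSection φ s) (q : Y → ℝ) (x : X) :
    push s q x = s x (φ x) * q (φ x) :=
  Fintype.sum_eq_single (φ x) fun y hy => by rw [hs.eq_zero_of_ne hy.symm, zero_mul]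

lemma support_subset_support_push_iff (hs : IsSection φ s) {p : X → ℝ} (hp : ∀ x, 0 ≤ p x)
    (q : Y → ℝ) :
    support p ⊆ support (push s q) ↔
      support p ⊆ support (push s (push (pureCh φ) p)) ∧
        support (push (pureCh φ) p) ⊆ support q := by
  have hφ : ∀ x ∈ support p, push (pureCh φ) p (φ x) ≠ 0 := fun x hx =>
    (support_push_pureCh φ hp).ge (Set.mem_image_of_mem φ hx)
  rw [support_push_pureCh φ hp, Set.image_subset_iff, ← Set.subset_inter_iff]
  refine forall₂_congr fun x hx => ?_
  simp [hs.push_apply, hφ x hx]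

lemma mul_log_div_push (hs : IsSection φ s) {p : X → ℝ} (hp : ∀ x, 0 ≤ p x) {q : Y → ℝ}
    (h : support p ⊆ support (push s q)) (x : X) :
    p x * Real.log (p x / push s q x) =
      p x * Real.log (p x / push s (push (pureCh φ) p) x) +
        p x * Real.log (push (pureCh φ) p (φ x) / q (φ x)) := by
  rcases eq_or_ne (p x) 0 with hx | hx
  · simp [hx]
  obtain ⟨hsp, hpq⟩ := (hs.support_subset_support_push_iff hp q).1 h
  have hsp_x : s x (φ x) * push (pureCh φ) p (φ x) ≠ 0 := hs.push_apply _ x ▸ hsp hx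
  have hp'_x := right_ne_zero_of_mul hsp_x
  have hq_x : q (φ x) ≠ 0 := hpq hp'_x
  rw [hs.push_apply, hs.push_apply, ← mul_add,
    ← Real.log_mul (div_ne_zero hx hsp_x) (div_ne_zero hp'_x hq_x)]
  congr 2
  field_simp

end IsSection

section RelEnt

variable {X Y : Type*} [Fintype X] [Fintype Y]

lemma sub_le_mul_log_div {a b : ℝ} (ha : 0 ≤ a) (hb : 0 ≤ b) (hab : a ≠ 0 → b ≠ 0) :
    a - b ≤ a * Real.log (a / b) := by
  rcases eq_or_ne a 0 with rfl | ha0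
  · simpa using hb
  have hkl := mul_nonneg hb (InformationTheory.klFun_nonneg (div_nonneg ha hb))
  rw [InformationTheory.klFun_apply, mul_sub, mul_add, ← mul_assoc,
    mul_div_cancel₀ a (hab ha0)] at hkl
  linarith

lemma IsDist.sum_mul_log_div_nonneg {p q : X → ℝ} (hp : IsDist p) (hq : IsDist q)
    (h : support p ⊆ support q) : 0 ≤ ∑ x, p x * Real.log (p x / q x) :=
  calc 0 = ∑ x, (p x - q x) := by rw [Finset.sum_sub_distrib, hp.2, hq.2, sub_self]
    _ ≤ ∑ x, p x * Real.log (p x / q x) :=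
      Finset.sum_le_sum fun x _ => sub_le_mul_log_div (hp.1 x) (hq.1 x) fun hx => h hx

lemma relEnt_of_support_subset {p q : X → ℝ} (h : support p ⊆ support q) :
    relEnt p q = ENNReal.ofReal (∑ x, p x * Real.log (p x / q x)) := by
  refine (if_pos h).trans (congrArg _ (Finset.sum_congr rfl fun x _ => ?_))
  split_ifs with hx
  · rw [hx, zero_mul]
  · rfl

lemma relEnt_of_not_support_subset {p q : X → ℝ} (h : ¬ support p ⊆ support q) :
    relEnt p q = ⊤ :=
  if_neg h

theorem IsSection.relEnt_push [DecidableEq Y] {φ : X → Y} {s : X → Y → ℝ} (hs : IsSection φ s)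
    {p : X → ℝ} (hp : IsDist p) {q : Y → ℝ} (hq : IsDist q) :
    relEnt p (push s q) =
      relEnt p (push s (push (pureCh φ) p)) + relEnt (push (pureCh φ) p) q := by
  have hsupp := hs.support_subset_support_push_iff hp.1 q
  by_cases h : support p ⊆ support (push s q)
  · obtain ⟨hsp, hpq⟩ := hsupp.1 h
    have hp' := (isChannel_pureCh φ).isDist_push hp
    rw [relEnt_of_support_subset h, relEnt_of_support_subset hsp, relEnt_of_support_subset hpq,
      ← ENNReal.ofReal_add (hp.sum_mul_log_div_nonneg (hs.1.isDist_push hp') hsp)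
        (hp'.sum_mul_log_div_nonneg hq hpq),
      sum_push_pureCh_mul φ p fun y => Real.log (push (pureCh φ) p y / q y),
      ← Finset.sum_add_distrib]
    simp only [hs.mul_log_div_push hp.1 h]
  · rw [relEnt_of_not_support_subset h]
    rcases not_and_or.1 (hsupp.not.1 h) with hsp | hpq
    · rw [relEnt_of_not_support_subset hsp, top_add]
    · rw [relEnt_of_not_support_subset hpq, add_top]

end RelEnt

/-- The quantity `D(p, q) + ∑ x, p x * D(f^x, g^x)`, where `f^x` is the column `fun y => f y x`.
The 2-relative entropy of a square with section data `(s, t)` is the case `q = s ∘ μ ∘ p`,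
`g = t ∘ f' ∘ μ`. -/
noncomputable def relEnt2 {X Y : Type*} [Fintype X] [Fintype Y]
    (p : X → ℝ) (f : Y → X → ℝ) (q : X → ℝ) (g : Y → X → ℝ) : ℝ≥0∞ :=
  relEnt p q + ∑ x, ENNReal.ofReal (p x) * relEnt (fun y => f y x) (fun y => g y x)

theorem relEnt2_vertical_comp_general {X Y X' Y' : Type*}
    [Fintype X] [Fintype Y] [Fintype X'] [Fintype Y'] [DecidableEq X'] [DecidableEq Y']
    {p : X → ℝ} {f : Y → X → ℝ} {f' : Y' → X' → ℝ} {q : X' → ℝ} {g : Y' → X' → ℝ}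
    {μ : X → X'} {ν : Y → Y'} {s : X → X' → ℝ} {t : Y → Y' → ℝ}
    (hp : IsDist p) (hf : IsChannel f) (hq : IsDist q) (hg : IsChannel g)
    (hs : IsSection μ s) (ht : IsSection ν t)
    (hcomm : chComp (pureCh ν) f = chComp f' (pureCh μ)) :
    relEnt2 p f (push s q) (chComp t (chComp g (pureCh μ))) =
      relEnt2 p f (push s (push (pureCh μ) p)) (chComp t (chComp f' (pureCh μ))) +
        relEnt2 (push (pureCh μ) p) f' q g := by
  have relEnt_column (x : X) :
      relEnt (fun y => f y x) (fun y => chComp t (chComp g (pureCh μ)) y x) =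
        relEnt (fun y => f y x) (fun y => chComp t (chComp f' (pureCh μ)) y x) +
          relEnt (fun y' => f' y' (μ x)) (fun y' => g y' (μ x)) := by
    have push_column : push (pureCh ν) (fun y => f y x) = fun y' => f' y' (μ x) := by
      ext y'
      exact (congrFun₂ hcomm y' x).trans (chComp_pureCh_apply f' μ y' x)
    have chComp_column (k : Y' → X' → ℝ) :
        (fun y => chComp t (chComp k (pureCh μ)) y x) = push t fun y' => k y' (μ x) := by
      ext y
      simp only [chComp_pureCh_apply, ← chComp_assoc]
      rfl
    rw [chComp_column, chComp_column, ← push_column]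
    exact ht.relEnt_push (hf.isDist x) (hg.isDist (μ x))
  simp only [relEnt2, hs.relEnt_push hp hq, relEnt_column, mul_add, Finset.sum_add_distrib,
    sum_ofReal_push_pureCh_mul μ hp.1]
  ring

/-- 2-relative entropy is functorial with respect to vertical composition. -/
theorem relEnt2_vertical_comp {X Y X' Y' X'' Y'' : Type*}
    [Fintype X] [Fintype Y] [Fintype X'] [Fintype Y'] [Fintype X''] [Fintype Y'']
    [DecidableEq X'] [DecidableEq Y'] [DecidableEq X''] [DecidableEq Y'']
    (p : X → ℝ) (f : Y → X → ℝ) (f' : Y' → X' → ℝ) (f'' : Y'' → X'' → ℝ)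
    (μ : X → X') (μ' : X' → X'') (ν : Y → Y') (ν' : Y' → Y'')
    (s : X → X' → ℝ) (s' : X' → X'' → ℝ) (t : Y → Y' → ℝ) (t' : Y' → Y'' → ℝ)
    (hp : IsDist p) (hf : IsChannel f) (hf' : IsChannel f') (hf'' : IsChannel f'')
    (hs : IsSection μ s) (hs' : IsSection μ' s')
    (ht : IsSection ν t) (ht' : IsSection ν' t')
    (hcomm : chComp (pureCh ν) f = chComp f' (pureCh μ))
    (hcomm' : chComp (pureCh ν') f' = chComp f'' (pureCh μ')) :
    (relEnt p (push (chComp s s') (push (pureCh (μ' ∘ μ)) p))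
      + ∑ x, ENNReal.ofReal (p x) *
          relEnt (fun y => f y x)
            (fun y => chComp (chComp t t') (chComp f'' (pureCh (μ' ∘ μ))) y x))
      = (relEnt p (push s (push (pureCh μ) p))
          + ∑ x, ENNReal.ofReal (p x) *
              relEnt (fun y => f y x)
                (fun y => chComp t (chComp f' (pureCh μ)) y x))
        + (relEnt (push (pureCh μ) p)
              (push s' (push (pureCh μ') (push (pureCh μ) p)))
            + ∑ x', ENNReal.ofReal (push (pureCh μ) p x') *
                relEnt (fun y' => f' y' x')
                  (fun y' => chComp t' (chComp f'' (pureCh μ')) y' x')) := by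
  have hp'' := (isChannel_pureCh μ').isDist_push ((isChannel_pureCh μ).isDist_push hp)
  simpa only [relEnt2, push_chComp, pureCh_comp, chComp_assoc] using
    relEnt2_vertical_comp_general hp hf (hs'.1.isDist_push hp'')
      (ht'.1.chComp (hf''.chComp (isChannel_pureCh μ'))) hs ht hcomm
end
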